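/- arXiv:2305.08463 — 2 statements merged into one kernel-verified Lean document; each statement's English description precedes it below -/
import Mathlib

section
/- (One-step length estimate from the Łojasiewicz inequality.) Let f : ℝ^d → ℝ, let y_{t−1}, y_t, y_{t+1}, ȳ ∈ ℝ^d, and let δ ∈ (0,∞], ā > 0, c̄ > 0. Let φ : [0,δ) → [0,∞) be continuous and concave with φ(0) = 0, continuously differentiable on (0,δ) with φ' > 0 (hence φ' non-increasing). Set r_t := f(ȳ) − f(y_t) and r_{t+1} := f(ȳ) − f(y_{t+1}), and assume: 0 < r_{t+1} ≤ r_t < δ; f is differentiable at y_t; f(y_{t+1}) − f(y_t) ≥ ā·‖y_{t+1} − y_t‖²; ‖y_t − y_{t−1}‖ ≥ c̄·‖∇f(y_t)‖; and the Łojasiewicz inequality φ'(r_t)·‖∇f(y_t)‖ ≥ 1 holds. Then 2‖y_{t+1} − y_t‖ ≤ ‖y_t − y_{t−1}‖ + (1/(ā·c̄))·(φ(r_t) − φ(r_{t+1})). -/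
open Set Filter Topology MeasureTheory
open scoped BigOperators RealInnerProductSpace

noncomputable section

/-- Euclidean space `ℝ^d`. -/
abbrev Euc (d : ℕ) := EuclideanSpace ℝ (Fin d)

/-- The convex subdifferential of a function `g` (viewed as a function on `[0,∞)`) at `u`. -/
def subdiffIci (g : ℝ → ℝ) (u : ℝ) : Set ℝ :=
  {c : ℝ | ∀ v ∈ Set.Ici (0:ℝ), g v - g u ≥ c * (v - u)}

/-- Assumption RS: the kernel `K` is bounded, continuous, non-negative, normalized, and
radially symmetric with profile `Khat`. -/
structure AssumptionRS (d : ℕ) (K : Euc d → ℝ) (Khat : ℝ → ℝ) : Prop where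
  bounded : ∃ M : ℝ, ∀ x, K x ≤ M
  cont : Continuous K
  nonneg : ∀ x, 0 ≤ K x
  normalized : ∫ x, K x = 1
  radial : ∀ x, K x = Khat (‖x‖ ^ 2 / 2)

/-- Assumption QM for the profile `Khat`, together with the selection `Kcheck`:
`Khat` is convex and non-increasing on `[0,∞)`, its right derivative at `0` exists as a real
number and equals `-(Kcheck 0)` (i.e. `Kcheck 0 = -Khat'(0+) > -∞`), and for every `u > 0`,
`-(Kcheck u)` belongs to the subdifferential of `Khat` at `u`. -/
structure AssumptionQM (Khat Kcheck : ℝ → ℝ) : Prop where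
  convexOn : ConvexOn ℝ (Set.Ici (0:ℝ)) Khat
  antitoneOn : AntitoneOn Khat (Set.Ici (0:ℝ))
  rderiv0 : Filter.Tendsto (fun v => (Khat v - Khat 0) / v)
      (nhdsWithin 0 (Set.Ioi 0)) (nhds (-(Kcheck 0)))
  subdiff : ∀ u : ℝ, 0 < u → -(Kcheck u) ∈ subdiffIci Khat u

/-- The kernel density estimate `f(y) = (1/(n hᵈ)) ∑ᵢ K((y - xᵢ)/h)`. -/
def KDE (d n : ℕ) (K : Euc d → ℝ) (x : Fin n → Euc d) (h : ℝ) (y : Euc d) : ℝ :=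
  (1 / ((n : ℝ) * h ^ d)) * ∑ i : Fin n, K (h⁻¹ • (y - x i))

/-- `f̌(y) = (1/(n hᵈ)) ∑ᵢ Ǩ(‖(y - xᵢ)/h‖²/2)`. -/
def fcheck (d n : ℕ) (Kcheck : ℝ → ℝ) (x : Fin n → Euc d) (h : ℝ) (y : Euc d) : ℝ :=
  (1 / ((n : ℝ) * h ^ d)) * ∑ i : Fin n, Kcheck (‖h⁻¹ • (y - x i)‖ ^ 2 / 2)

/-- The mean shift vector `m(y)`: zero if `f̌(y) = 0`, and otherwise
`m(y) = ∑ᵢ Ǩ(‖(y - xᵢ)/h‖²/2)(xᵢ - y) / ∑ᵢ Ǩ(‖(y - xᵢ)/h‖²/2)`. -/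
def msMap (d n : ℕ) (Kcheck : ℝ → ℝ) (x : Fin n → Euc d) (h : ℝ) (y : Euc d) : Euc d :=
  if fcheck d n Kcheck x h y = 0 then 0
  else (∑ i : Fin n, Kcheck (‖h⁻¹ • (y - x i)‖ ^ 2 / 2))⁻¹ •
    ∑ i : Fin n, Kcheck (‖h⁻¹ • (y - x i)‖ ^ 2 / 2) • (x i - y)

/-- `y` is a mean shift iteration sequence: `y (t+1) = y t + m (y t)` for all `t`. -/
def MSSeq (d n : ℕ) (Kcheck : ℝ → ℝ) (x : Fin n → Euc d) (h : ℝ) (y : ℕ → Euc d) : Prop :=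
  ∀ t : ℕ, y (t + 1) = y t + msMap d n Kcheck x h (y t)

/-- `f` has the Łojasiewicz property on the set `S`. -/
def LojasiewiczOn (d : ℕ) (f : Euc d → ℝ) (S : Set (Euc d)) : Prop :=
  ∃ ε > (0:ℝ), ∃ c > (0:ℝ), ∃ θ ∈ Set.Ico (0:ℝ) 1,
    ∀ x' ∈ S, ∀ x ∈ S, ‖x' - x‖ < ε → 0 ≤ f x' - f x →
      ‖gradient f x‖ ≥ c * (f x' - f x) ^ θ

/-- `f` satisfies the Łojasiewicz inequality at `ybar` with exponent `θ`, on the set `S`. -/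
def LojasiewiczAtWith (d : ℕ) (f : Euc d → ℝ) (S : Set (Euc d)) (ybar : Euc d) (θ : ℝ) : Prop :=
  ∃ ε > (0:ℝ), ∃ c > (0:ℝ),
    ∀ y ∈ S, ‖ybar - y‖ < ε → 0 ≤ f ybar - f y →
      ‖gradient f y‖ ≥ c * (f ybar - f y) ^ θ

/-!
With `ℓ = f ȳ`, concavity bounds the decrease of `φ (ℓ - f ·)` over the step from `y₁` to `y₂` from
below by `φ' (ℓ - f y₁) * (f y₂ - f y₁)`. The Łojasiewicz inequality and the relative error
condition make the factor `φ' (ℓ - f y₁)` at least `c / ‖y₁ - y₀‖`, and sufficient increase makes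
the other factor at least `a * ‖y₂ - y₁‖ ^ 2`. Hence `‖y₂ - y₁‖ ^ 2` is at most the product of
`‖y₁ - y₀‖` and the decrease of `φ (ℓ - f ·)` scaled by `1 / (a * c)`, and AM-GM turns this product
into a sum.
-/

theorem norm_gradient {𝕜 E : Type*} [RCLike 𝕜] [NormedAddCommGroup E] [InnerProductSpace 𝕜 E]
    [CompleteSpace E] (f : E → 𝕜) (x : E) : ‖gradient f x‖ = ‖fderiv 𝕜 f x‖ :=
  (InnerProductSpace.toDual 𝕜 E).symm.norm_map _

section ConcaveDesingularization

variable {S : Set ℝ} {φ : ℝ → ℝ} {p r s : ℝ}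

theorem mul_sub_le_sub_of_concaveOn_of_hasDerivWithinAt (hφ : ConcaveOn ℝ S φ) (hr : r ∈ S)
    (hs : s ∈ S) (hderiv : HasDerivWithinAt φ p S r) : p * (r - s) ≤ φ r - φ s := by
  rcases lt_trichotomy s r with hsr | rfl | hrs
  · have hslope := hφ.le_slope_of_hasDerivWithinAt hs hr hsr hderiv
    rwa [slope_def_field, le_div_iff₀ (sub_pos.2 hsr)] at hslope
  · simp
  · have hslope := hφ.slope_le_of_hasDerivWithinAt hr hs hrs hderiv
    rw [slope_def_field, div_le_iff₀ (sub_pos.2 hrs)] at hslope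
    linarith

theorem mul_sub_le_mul_sub_of_lojasiewicz {c g D : ℝ} (hφ : ConcaveOn ℝ S φ) (hr : r ∈ S)
    (hs : s ∈ S) (hsr : s ≤ r) (hderiv : HasDerivWithinAt φ p S r) (hc : 0 ≤ c) (hp : 0 ≤ p)
    (hD : 0 ≤ D) (hrel : c * g ≤ D) (hloja : 1 ≤ p * g) : c * (r - s) ≤ D * (φ r - φ s) := by
  have hdrop : 0 ≤ r - s := sub_nonneg.2 hsr
  calc
    c * (r - s) ≤ c * (r - s) * (p * g) := le_mul_of_one_le_right (mul_nonneg hc hdrop) hloja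
    _ = c * g * (p * (r - s)) := by ring
    _ ≤ D * (p * (r - s)) := mul_le_mul_of_nonneg_right hrel (mul_nonneg hp hdrop)
    _ ≤ D * (φ r - φ s) := by
      gcongr
      exact mul_sub_le_sub_of_concaveOn_of_hasDerivWithinAt hφ hr hs hderiv

end ConcaveDesingularization

theorem ms_one_step_length_estimate_general {E : Type*} [NormedAddCommGroup E] [NormedSpace ℝ E]
    {f : E → ℝ} {y₀ y₁ y₂ : E} {ℓ a c p : ℝ} {S : Set ℝ} {φ : ℝ → ℝ} (ha : 0 < a) (hc : 0 < c)
    (hφ : ConcaveOn ℝ S φ) (hr₁ : ℓ - f y₁ ∈ S) (hr₂ : ℓ - f y₂ ∈ S)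
    (hderiv : HasDerivWithinAt φ p S (ℓ - f y₁)) (hsuff : a * ‖y₂ - y₁‖ ^ 2 ≤ f y₂ - f y₁)
    (hrel : c * ‖fderiv ℝ f y₁‖ ≤ ‖y₁ - y₀‖) (hloja : 1 ≤ p * ‖fderiv ℝ f y₁‖) :
    2 * ‖y₂ - y₁‖ ≤ ‖y₁ - y₀‖ + 1 / (a * c) * (φ (ℓ - f y₁) - φ (ℓ - f y₂)) := by
  have hp : 0 ≤ p := (pos_of_mul_pos_left (one_pos.trans_le hloja) (norm_nonneg _)).le
  have hmono : ℓ - f y₂ ≤ ℓ - f y₁ :=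
    sub_le_sub_left (sub_nonneg.1 (le_trans (by positivity) hsuff)) ℓ
  have hgap : 0 ≤ φ (ℓ - f y₁) - φ (ℓ - f y₂) :=
    (mul_nonneg hp (sub_nonneg.2 hmono)).trans
      (mul_sub_le_sub_of_concaveOn_of_hasDerivWithinAt hφ hr₁ hr₂ hderiv)
  have hsq : a * c * ‖y₂ - y₁‖ ^ 2 ≤ ‖y₁ - y₀‖ * (φ (ℓ - f y₁) - φ (ℓ - f y₂)) :=
    calc
      a * c * ‖y₂ - y₁‖ ^ 2 = c * (a * ‖y₂ - y₁‖ ^ 2) := by ring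
      _ ≤ c * ((ℓ - f y₁) - (ℓ - f y₂)) := by
        rw [sub_sub_sub_cancel_left]
        gcongr
      _ ≤ ‖y₁ - y₀‖ * (φ (ℓ - f y₁) - φ (ℓ - f y₂)) :=
        mul_sub_le_mul_sub_of_lojasiewicz hφ hr₁ hr₂ hmono hderiv hc.le hp (norm_nonneg _)
          hrel hloja
  refine two_mul_le_add_of_sq_le_mul (norm_nonneg _) (by positivity) ?_
  rwa [mul_left_comm, one_div_mul_eq_div, le_div_iff₀' (by positivity)]

/-- One-step length estimate from the Łojasiewicz inequality:
with a desingularizing function `φ` on `[0, δ)` (`δ ∈ (0,∞]`, encoded as `δ : ℝ≥0∞`), if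
`r_{t} := f(ȳ) − f(y_t)` and `r_{t+1} := f(ȳ) − f(y_{t+1})` satisfy `0 < r_{t+1} ≤ r_t < δ`,
`f` is differentiable at `y_t`, the sufficient increase condition
`f(y_{t+1}) − f(y_t) ≥ ā‖y_{t+1} − y_t‖²` and the relative error condition
`‖y_t − y_{t−1}‖ ≥ c̄‖∇f(y_t)‖` hold, and the Łojasiewicz inequality `φ'(r_t)‖∇f(y_t)‖ ≥ 1`
holds, then `2‖y_{t+1} − y_t‖ ≤ ‖y_t − y_{t−1}‖ + (1/(ā c̄))(φ(r_t) − φ(r_{t+1}))`. -/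
theorem ms_one_step_length_estimate
    (d : ℕ) (f : Euc d → ℝ)
    (ytm ytc ytp ybar : Euc d)  -- y_{t-1}, y_t, y_{t+1}, and ȳ
    (δ : ENNReal) (hδ : 0 < δ)
    (abar cbar : ℝ) (habar : 0 < abar) (hcbar : 0 < cbar)
    (φ φ' : ℝ → ℝ)
    (hφcont : ContinuousOn φ {u : ℝ | 0 ≤ u ∧ ENNReal.ofReal u < δ})
    (hφnonneg : ∀ u : ℝ, 0 ≤ u → ENNReal.ofReal u < δ → 0 ≤ φ u)
    (hφconc : ConcaveOn ℝ {u : ℝ | 0 ≤ u ∧ ENNReal.ofReal u < δ} φ)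
    (hφ0 : φ 0 = 0)
    (hφderiv : ∀ u : ℝ, 0 < u → ENNReal.ofReal u < δ → HasDerivAt φ (φ' u) u)
    (hφ'cont : ContinuousOn φ' {u : ℝ | 0 < u ∧ ENNReal.ofReal u < δ})
    (hφ'pos : ∀ u : ℝ, 0 < u → ENNReal.ofReal u < δ → 0 < φ' u)
    (hr_pos : 0 < f ybar - f ytp)
    (hr_mono : f ybar - f ytp ≤ f ybar - f ytc)
    (hr_lt : ENNReal.ofReal (f ybar - f ytc) < δ)
    (hdiff : DifferentiableAt ℝ f ytc)
    (hsuff : f ytp - f ytc ≥ abar * ‖ytp - ytc‖ ^ 2)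
    (hrel : ‖ytc - ytm‖ ≥ cbar * ‖gradient f ytc‖)
    (hloja : φ' (f ybar - f ytc) * ‖gradient f ytc‖ ≥ 1) :
    2 * ‖ytp - ytc‖ ≤ ‖ytc - ytm‖ +
      1 / (abar * cbar) * (φ (f ybar - f ytc) - φ (f ybar - f ytp)) := by
  rw [ge_iff_le, norm_gradient] at hrel hloja
  exact ms_one_step_length_estimate_general habar hcbar hφconc ⟨hr_pos.le.trans hr_mono, hr_lt⟩
    ⟨hr_pos.le, (ENNReal.ofReal_le_ofReal hr_mono).trans_lt hr_lt⟩
    (hφderiv _ (hr_pos.trans_le hr_mono) hr_lt).hasDerivWithinAt hsuff hrel hloja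
end
end

section
/- (A C^∞ function too flat to satisfy any Łojasiewicz inequality.) Let d ≥ 1, β > 0, x' ∈ ℝ^d, and define g : ℝ^d → ℝ by g(x) = −exp(−‖x − x'‖^{−β}) for x ≠ x' and g(x') = 0. Then g is differentiable with ‖∇g(x)‖ = β·exp(−‖x − x'‖^{−β})·‖x − x'‖^{−β−1} for x ≠ x' and ∇g(x') = 0, and g does not have the Łojasiewicz property at x': for every θ ∈ [0,1), every c > 0, and every ε > 0 there exists x with 0 < ‖x − x'‖ < ε such that ‖∇g(x)‖ < c·(g(x') − g(x))^θ. -/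
open Set Filter Topology MeasureTheory
open scoped BigOperators RealInnerProductSpace

noncomputable section

/-!
Write `g x = φ ‖x - x'‖` with `φ r = -exp (-r ^ (-β))`. Off the centre the derivative of the norm
has norm `1`, so `‖∇ g x‖ = |φ' r| = β * exp (-r ^ (-β)) * r ^ (-β - 1)` with `r = ‖x - x'‖`.
Dividing by `(g x' - g x) ^ θ = exp (-r ^ (-β)) ^ θ` leaves
`β * r ^ (-β - 1) * exp (-(1 - θ) * r ^ (-β))`, which tends to `0` with `r` because `θ < 1`: the
substitution `t = r ^ (-β)` turns it into a power of `t` against a decaying exponential.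
-/

section Radial

variable {E : Type*} [NormedAddCommGroup E] {φ : ℝ → ℝ} {φ' : ℝ} {a x : E}

theorem hasFDerivAt_comp_norm_sub [NormedSpace ℝ E] (hφ : HasDerivAt φ φ' ‖x - a‖)
    (hnorm : DifferentiableAt ℝ (‖·‖) (x - a)) :
    HasFDerivAt (fun y => φ ‖y - a‖) (φ' • fderiv ℝ (‖·‖) (x - a)) x :=
  hφ.comp_hasFDerivAt x <| hnorm.hasFDerivAt.comp x ((hasFDerivAt_id x).sub_const a)

theorem hasFDerivAt_comp_norm_sub_self [NormedSpace ℝ E] (hφ : HasDerivWithinAt φ 0 (Ici 0) 0)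
    (a : E) : HasFDerivAt (fun y => φ ‖y - a‖) (0 : E →L[ℝ] ℝ) a := by
  have hlittleO : (fun r => φ r - φ 0) =o[𝓝[≥] 0] fun r => r := by
    simpa using hφ.isLittleO
  rw [hasFDerivAt_iff_isLittleO]
  simpa [Function.comp_def] using
    (hlittleO.comp_tendsto (tendsto_norm_sub_self_nhdsGE a)).of_norm_right

variable [InnerProductSpace ℝ E]

theorem differentiableAt_comp_norm_sub (hφ : DifferentiableAt ℝ φ ‖x - a‖) (hx : x ≠ a) :
    DifferentiableAt ℝ (fun y => φ ‖y - a‖) x :=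
  hφ.comp x <| (differentiableAt_id.sub_const a).norm ℝ (sub_ne_zero.2 hx)

theorem norm_gradient_comp_norm_sub [CompleteSpace E] (hφ : HasDerivAt φ φ' ‖x - a‖)
    (hx : x ≠ a) : ‖gradient (fun y => φ ‖y - a‖) x‖ = |φ'| := by
  have : Nontrivial E := nontrivial_of_ne x a hx
  have hnorm : DifferentiableAt ℝ (‖·‖) (x - a) :=
    differentiableAt_id.norm ℝ (sub_ne_zero.2 hx)
  rw [gradient, LinearIsometryEquiv.norm_map, (hasFDerivAt_comp_norm_sub hφ hnorm).fderiv,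
    norm_smul, norm_fderiv_norm hnorm, mul_one, Real.norm_eq_abs]

end Radial

section Decay

variable {β : ℝ}

theorem tendsto_rpow_mul_exp_neg_mul_rpow_neg_nhdsGT_zero (hβ : 0 < β) (s : ℝ) {b : ℝ}
    (hb : 0 < b) : Tendsto (fun r : ℝ => r ^ s * Real.exp (-b * r ^ (-β))) (𝓝[>] 0) (𝓝 0) := by
  refine ((tendsto_rpow_mul_exp_neg_mul_atTop_nhds_zero (-s / β) b hb).comp
    (tendsto_rpow_neg_nhdsGT_zero (neg_lt_zero.2 hβ))).congr' ?_
  filter_upwards [self_mem_nhdsWithin] with r (hr : 0 < r)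
  have hexponent : -β * (-s / β) = s := by field_simp
  rw [Function.comp_apply, ← Real.rpow_mul hr.le, hexponent]

theorem eventually_mul_exp_mul_rpow_lt_mul_exp_rpow (hβ : 0 < β) {θ c : ℝ} (hθ : θ < 1)
    (hc : 0 < c) :
    ∀ᶠ r : ℝ in 𝓝[>] 0,
      β * Real.exp (-r ^ (-β)) * r ^ (-β - 1) < c * Real.exp (-r ^ (-β)) ^ θ := by
  have hdecay : Tendsto (fun r : ℝ => β * (r ^ (-β - 1) * Real.exp (-(1 - θ) * r ^ (-β))))
      (𝓝[>] 0) (𝓝 0) := by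
    simpa only [mul_zero] using (tendsto_rpow_mul_exp_neg_mul_rpow_neg_nhdsGT_zero hβ (-β - 1)
      (sub_pos.2 hθ)).const_mul β
  filter_upwards [hdecay.eventually_lt_const hc] with r hr
  have hsplit : Real.exp (-r ^ (-β)) =
      Real.exp (-(1 - θ) * r ^ (-β)) * Real.exp (-r ^ (-β)) ^ θ := by
    rw [← Real.exp_mul, ← Real.exp_add]
    ring_nf
  calc β * Real.exp (-r ^ (-β)) * r ^ (-β - 1)
      = β * (r ^ (-β - 1) * Real.exp (-(1 - θ) * r ^ (-β))) * Real.exp (-r ^ (-β)) ^ θ := by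
        nth_rw 1 [hsplit]
        ring
    _ < c * Real.exp (-r ^ (-β)) ^ θ := by gcongr

end Decay

/-- The radial profile `r ↦ -exp (-r ^ (-β))` of the flat function, extended by `0` at `r = 0`.
The extension comes from `expNegInvGlue`, since `0 ^ (-β) = 0` would give the value `-1` there. -/
def flatProfile (β r : ℝ) : ℝ := -expNegInvGlue (r ^ β)

section FlatProfile

variable {β r : ℝ}

theorem flatProfile_zero (hβ : β ≠ 0) : flatProfile β 0 = 0 := by
  rw [flatProfile, Real.zero_rpow hβ, expNegInvGlue.zero, neg_zero]

theorem flatProfile_of_pos (β : ℝ) (hr : 0 < r) :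
    flatProfile β r = -Real.exp (-r ^ (-β)) := by
  rw [flatProfile, expNegInvGlue, if_neg (Real.rpow_pos_of_pos hr β).not_ge,
    Real.rpow_neg hr.le]

theorem hasDerivAt_flatProfile (β : ℝ) (hr : 0 < r) :
    HasDerivAt (flatProfile β) (-(β * Real.exp (-r ^ (-β)) * r ^ (-β - 1))) r := by
  have hexp : HasDerivAt (fun t : ℝ => -Real.exp (-t ^ (-β)))
      (-(Real.exp (-r ^ (-β)) * -(-β * r ^ (-β - 1)))) r :=
    (Real.hasDerivAt_rpow_const (Or.inl hr.ne')).fun_neg.exp.fun_neg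
  have heq : flatProfile β =ᶠ[𝓝 r] fun t => -Real.exp (-t ^ (-β)) :=
    (eventually_gt_nhds hr).mono fun _ => flatProfile_of_pos β
  exact (hexp.congr_of_eventuallyEq heq).congr_deriv (by ring)

theorem hasDerivWithinAt_flatProfile_zero (hβ : 0 < β) :
    HasDerivWithinAt (flatProfile β) 0 (Ici 0) 0 := by
  rw [hasDerivWithinAt_iff_tendsto_slope, Ici_sdiff_left]
  have hdecay := (tendsto_rpow_mul_exp_neg_mul_rpow_neg_nhdsGT_zero hβ (-1) one_pos).neg
  rw [neg_zero] at hdecay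
  refine hdecay.congr' ?_
  filter_upwards [self_mem_nhdsWithin] with r (hr : 0 < r)
  rw [slope_def_field, flatProfile_zero hβ.ne', flatProfile_of_pos β hr, Real.rpow_neg_one]
  ring_nf

end FlatProfile

theorem exists_norm_sub_lt_of_eventually_nhdsNE {E : Type*} [NormedAddCommGroup E] {a : E}
    [(𝓝[≠] a).NeBot] {p : E → Prop} (hp : ∀ᶠ x in 𝓝[≠] a, p x) {ε : ℝ} (hε : 0 < ε) :
    ∃ x, 0 < ‖x - a‖ ∧ ‖x - a‖ < ε ∧ p x := by
  have hnear : ∀ᶠ x in 𝓝[≠] a, ‖x - a‖ ∈ Ioo 0 ε :=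
    (tendsto_norm_sub_self_nhdsNE a).eventually (Ioo_mem_nhdsGT hε)
  obtain ⟨x, ⟨hpos, hlt⟩, hpx⟩ := (hnear.and hp).exists
  exact ⟨x, hpos, hlt, hpx⟩

theorem too_flat_no_lojasiewicz_general {E : Type*} [NormedAddCommGroup E]
    [InnerProductSpace ℝ E] [CompleteSpace E] {β : ℝ} (hβ : 0 < β) {a : E} {g : E → ℝ}
    (hg : ∀ x, x ≠ a → g x = -Real.exp (-‖x - a‖ ^ (-β))) (hg0 : g a = 0) :
    Differentiable ℝ g ∧
    (∀ x, x ≠ a →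
      ‖gradient g x‖ = β * Real.exp (-‖x - a‖ ^ (-β)) * ‖x - a‖ ^ (-β - 1)) ∧
    gradient g a = 0 ∧
    ∀ θ < (1 : ℝ), ∀ c > (0 : ℝ), ∀ᶠ x in 𝓝[≠] a, ‖gradient g x‖ < c * (g a - g x) ^ θ := by
  have hpos : ∀ x, x ≠ a → 0 < ‖x - a‖ := fun x hx => norm_sub_pos_iff.2 hx
  have hradial : g = fun x => flatProfile β ‖x - a‖ := by
    funext x
    rcases eq_or_ne x a with rfl | hx
    · rw [hg0, sub_self, norm_zero, flatProfile_zero hβ.ne']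
    · rw [hg x hx, flatProfile_of_pos β (hpos x hx)]
  have hcentre : HasFDerivAt g (0 : E →L[ℝ] ℝ) a :=
    hradial ▸ hasFDerivAt_comp_norm_sub_self (hasDerivWithinAt_flatProfile_zero hβ) a
  have hgrad : ∀ x, x ≠ a →
      ‖gradient g x‖ = β * Real.exp (-‖x - a‖ ^ (-β)) * ‖x - a‖ ^ (-β - 1) := by
    intro x hx
    rw [hradial, norm_gradient_comp_norm_sub (hasDerivAt_flatProfile β (hpos x hx)) hx, abs_neg,
      abs_of_nonneg (by positivity)]
  refine ⟨fun x => ?_, hgrad, by rw [gradient, hcentre.fderiv, map_zero], fun θ hθ c hc => ?_⟩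
  · rcases eq_or_ne x a with rfl | hx
    · exact hcentre.differentiableAt
    · exact hradial ▸ differentiableAt_comp_norm_sub
        (hasDerivAt_flatProfile β (hpos x hx)).differentiableAt hx
  · filter_upwards [self_mem_nhdsWithin, (tendsto_norm_sub_self_nhdsNE a).eventually
      (eventually_mul_exp_mul_rpow_lt_mul_exp_rpow hβ hθ hc)] with x hx hflat
    rwa [hgrad x hx, hg0, hg x hx, zero_sub, neg_neg]

/-- A `C^∞` function too flat to satisfy any Łojasiewicz inequality: for `d ≥ 1`,
`β > 0`, the function `g(x) = −exp(−‖x − x'‖^{−β})` (with `g(x') = 0`) is differentiable, its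
gradient has norm `β·exp(−‖x−x'‖^{−β})·‖x−x'‖^{−β−1}` away from `x'` and vanishes at `x'`, and
`g` does not have the Łojasiewicz property at `x'`: for every `θ ∈ [0,1)`, `c > 0`, `ε > 0`
there is `x` with `0 < ‖x − x'‖ < ε` and `‖∇g(x)‖ < c·(g(x') − g(x))^θ`. -/
theorem too_flat_no_lojasiewicz
    (d : ℕ) (hd : 1 ≤ d) (β : ℝ) (hβ : 0 < β) (x' : Euc d)
    (g : Euc d → ℝ)
    (hg : ∀ x : Euc d, x ≠ x' → g x = -Real.exp (-‖x - x'‖ ^ (-β)))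
    (hg0 : g x' = 0) :
    Differentiable ℝ g ∧
    (∀ x : Euc d, x ≠ x' →
      ‖gradient g x‖ = β * Real.exp (-‖x - x'‖ ^ (-β)) * ‖x - x'‖ ^ (-β - 1)) ∧
    gradient g x' = 0 ∧
    ∀ θ : ℝ, θ ∈ Set.Ico (0:ℝ) 1 → ∀ c : ℝ, 0 < c → ∀ ε : ℝ, 0 < ε →
      ∃ x : Euc d, 0 < ‖x - x'‖ ∧ ‖x - x'‖ < ε ∧
        ‖gradient g x‖ < c * (g x' - g x) ^ θ := by
  have : Nonempty (Fin d) := ⟨⟨0, hd⟩⟩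
  obtain ⟨hdiff, hgrad, hcentre, hflat⟩ := too_flat_no_lojasiewicz_general hβ hg hg0
  exact ⟨hdiff, hgrad, hcentre, fun θ hθ c hc _ hε =>
    exists_norm_sub_lt_of_eventually_nhdsNE (hflat θ hθ.2 c hc) hε⟩
end
end
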